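/- Let k ≥ 1 and d ≥ 1 be integers and ζ_k := e^{2πi/k}. Define, for n ≥ 0, A^•_{2n}(2k,1) := Σ_{n_1+⋯+n_k = n, n_i ≥ 0} multinomial(2n+k; 2n_1+1, …, 2n_k+1) · ζ_k^{Σ_{l=1}^{k} l·n_l} and A^★_{2n}(2k,1) := Σ_{n_1+⋯+n_k = n, n_i ≥ 0} multinomial(2n; 2n_1, …, 2n_k) · (∏_{l=1}^{k} (2^{2n_l} − 2) B_{2n_l}) · ζ_k^{Σ_{l=1}^{k} l·n_l}. Then: (a) A^•_{2n}(2k,1) = 0 and A^★_{2n}(2k,1) = 0 whenever k does not divide n; (b) ζ^•_d({2k}^d) = (−1)^{d} (−1)^{kd} A^•_{2kd}(2k,1) π^{2kd} / ((2d+1)k)!; (c) ζ^★_d({2k}^d) = (−1)^{k(d−1)} A^★_{2kd}(2k,1) π^{2kd} / (2kd)!. -/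

import Mathlib

open Complex Filter Finset Topology

noncomputable section

/-- Truncated strict multiple zeta sum `∑_{0<m_1<⋯<m_d≤M} ∏_j m_j^{-κ}`. -/
def mzvSumLt (d κ M : ℕ) : ℂ :=
  ∑ m ∈ (Fintype.piFinset fun _ : Fin d => Finset.Icc 1 M).filter
      (fun m => ∀ i j : Fin d, i < j → m i < m j),
    ∏ j, 1 / (m j : ℂ) ^ κ

/-- Truncated non-strict multiple zeta sum `∑_{0<m_1≤⋯≤m_d≤M} ∏_j m_j^{-κ}`. -/
def mzvSumLe (d κ M : ℕ) : ℂ :=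
  ∑ m ∈ (Fintype.piFinset fun _ : Fin d => Finset.Icc 1 M).filter
      (fun m => ∀ i j : Fin d, i < j → m i ≤ m j),
    ∏ j, 1 / (m j : ℂ) ^ κ

/-- `A^•_{2n}(2k,1) = Σ_{n_1+⋯+n_k=n} multinomial(2n+k; 2n_1+1,…,2n_k+1)
ζ_k^{Σ_l l n_l}`. -/
def AbulletOne (k n : ℕ) : ℂ :=
  ∑ f ∈ Finset.Nat.antidiagonalTuple k n,
    (Nat.multinomial Finset.univ (fun i => 2 * f i + 1) : ℂ) *
      Complex.exp (2 * Real.pi * Complex.I / k) ^ (∑ i : Fin k, ((i : ℕ) + 1) * f i)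

/-- `A^★_{2n}(2k,1) = Σ_{n_1+⋯+n_k=n} multinomial(2n; 2n_1,…,2n_k)
(∏_l (2^{2n_l}-2) B_{2n_l}) ζ_k^{Σ_l l n_l}`. -/
def AstarOne (k n : ℕ) : ℂ :=
  ∑ f ∈ Finset.Nat.antidiagonalTuple k n,
    (Nat.multinomial Finset.univ (fun i => 2 * f i) : ℂ) *
      (∏ i : Fin k, ((2 : ℂ) ^ (2 * f i) - 2) * (bernoulli' (2 * f i) : ℂ)) *
      Complex.exp (2 * Real.pi * Complex.I / k) ^ (∑ i : Fin k, ((i : ℕ) + 1) * f i)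

lemma mzvSumLt_zero (κ M : ℕ) : mzvSumLt 0 κ M = 1 := by
  simp [mzvSumLt]

lemma mzvSumLe_zero (κ M : ℕ) : mzvSumLe 0 κ M = 1 := by
  simp [mzvSumLe]

lemma mzvSumLt_succ_zero (d κ : ℕ) : mzvSumLt (d + 1) κ 0 = 0 := by
  unfold mzvSumLt
  rw [Finset.sum_eq_zero]
  intro m hm
  simp only [Finset.mem_filter, Fintype.mem_piFinset, Finset.mem_Icc] at hm
  have := hm.1 0
  omega

lemma mzvSumLe_succ_zero (d κ : ℕ) : mzvSumLe (d + 1) κ 0 = 0 := by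
  unfold mzvSumLe
  rw [Finset.sum_eq_zero]
  intro m hm
  simp only [Finset.mem_filter, Fintype.mem_piFinset, Finset.mem_Icc] at hm
  have := hm.1 0
  omega

lemma mzvSumLt_succ_succ (d κ M : ℕ) :
    mzvSumLt (d + 1) κ (M + 1) =
      mzvSumLt (d + 1) κ M + 1 / ((M : ℂ) + 1) ^ κ * mzvSumLt d κ M := by
  unfold mzvSumLt
  rw [← Finset.sum_filter_add_sum_filter_not _ (fun m : Fin (d + 1) → ℕ => m (Fin.last d) ≤ M)]
  congr 1
  · apply Finset.sum_congr _ (fun _ _ => rfl)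
    ext m
    simp only [Finset.mem_filter, Fintype.mem_piFinset, Finset.mem_Icc]
    constructor
    · rintro ⟨⟨h1, h2⟩, h3⟩
      refine ⟨fun i => ⟨(h1 i).1, ?_⟩, h2⟩
      rcases (Fin.le_last i).lt_or_eq with h | h
      · have := h2 _ _ h
        omega
      · rw [h]; exact h3
    · rintro ⟨h1, h2⟩
      exact ⟨⟨fun i => ⟨(h1 i).1, by have := (h1 i).2; omega⟩, h2⟩, (h1 _).2⟩
  · rw [Finset.mul_sum]
    refine Finset.sum_bij' (fun m _ => Fin.init m)
      (fun m _ => (Fin.snoc m (M + 1) : Fin (d + 1) → ℕ)) ?_ ?_ ?_ ?_ ?_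
    · intro m
      simp only [Finset.mem_filter, Fintype.mem_piFinset, Finset.mem_Icc]
      rintro ⟨⟨h1, h2⟩, h3⟩
      refine ⟨fun i => ⟨(h1 _).1, ?_⟩, fun i j hij => h2 _ _ (by simpa using hij)⟩
      have := h2 i.castSucc (Fin.last d) (Fin.castSucc_lt_last i)
      have := (h1 (Fin.last d)).2
      simp only [Fin.init]
      omega
    · intro m
      simp only [Finset.mem_filter, Fintype.mem_piFinset, Finset.mem_Icc]
      rintro ⟨h1, h2⟩
      refine ⟨⟨fun i => ?_, fun i j => ?_⟩, by simp⟩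
      · refine Fin.lastCases ?_ (fun i => ?_) i
        · simp
        · have := h1 i
          simp; omega
      · refine Fin.lastCases ?_ (fun j => ?_) j <;> refine Fin.lastCases ?_ (fun i => ?_) i
        · simp
        · intro _
          have := h1 i
          simp; omega
        · intro h
          exact absurd h (not_lt.2 (Fin.le_last _))
        · intro h
          simpa using h2 i j (by simpa using h)
    · intro m
      simp only [Finset.mem_filter, Fintype.mem_piFinset, Finset.mem_Icc]
      rintro ⟨⟨h1, h2⟩, h3⟩
      have : M + 1 = m (Fin.last d) := by have := h1 (Fin.last d); omega
      rw [this]; exact Fin.snoc_init_self m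
    · intro m _
      simp
    · intro m
      simp only [Finset.mem_filter, Fintype.mem_piFinset, Finset.mem_Icc]
      rintro ⟨⟨h1, h2⟩, h3⟩
      have : m (Fin.last d) = M + 1 := by have := h1 (Fin.last d); omega
      rw [Fin.prod_univ_castSucc, this, mul_comm]
      simp [Fin.init]

lemma mzvSumLe_succ_succ (d κ M : ℕ) :
    mzvSumLe (d + 1) κ (M + 1) =
      mzvSumLe (d + 1) κ M + 1 / ((M : ℂ) + 1) ^ κ * mzvSumLe d κ (M + 1) := by
  unfold mzvSumLe
  rw [← Finset.sum_filter_add_sum_filter_not _ (fun m : Fin (d + 1) → ℕ => m (Fin.last d) ≤ M)]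
  congr 1
  · apply Finset.sum_congr _ (fun _ _ => rfl)
    ext m
    simp only [Finset.mem_filter, Fintype.mem_piFinset, Finset.mem_Icc]
    constructor
    · rintro ⟨⟨h1, h2⟩, h3⟩
      refine ⟨fun i => ⟨(h1 i).1, ?_⟩, h2⟩
      rcases (Fin.le_last i).lt_or_eq with h | h
      · have := h2 _ _ h
        omega
      · rw [h]; exact h3
    · rintro ⟨h1, h2⟩
      exact ⟨⟨fun i => ⟨(h1 i).1, by have := (h1 i).2; omega⟩, h2⟩, (h1 _).2⟩
  · rw [Finset.mul_sum]
    refine Finset.sum_bij' (fun m _ => Fin.init m)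
      (fun m _ => (Fin.snoc m (M + 1) : Fin (d + 1) → ℕ)) ?_ ?_ ?_ ?_ ?_
    · intro m
      simp only [Finset.mem_filter, Fintype.mem_piFinset, Finset.mem_Icc]
      rintro ⟨⟨h1, h2⟩, h3⟩
      exact ⟨fun i => h1 _, fun i j hij => h2 _ _ (by simpa using hij)⟩
    · intro m
      simp only [Finset.mem_filter, Fintype.mem_piFinset, Finset.mem_Icc]
      rintro ⟨h1, h2⟩
      refine ⟨⟨fun i => ?_, fun i j => ?_⟩, by simp⟩
      · refine Fin.lastCases ?_ (fun i => ?_) i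
        · simp
        · have := h1 i
          simp; omega
      · refine Fin.lastCases ?_ (fun j => ?_) j <;> refine Fin.lastCases ?_ (fun i => ?_) i
        · simp
        · intro _
          have := h1 i
          simp; omega
        · intro h
          exact absurd h (not_lt.2 (Fin.le_last _))
        · intro h
          simpa using h2 i j (by simpa using h)
    · intro m
      simp only [Finset.mem_filter, Fintype.mem_piFinset, Finset.mem_Icc]
      rintro ⟨⟨h1, h2⟩, h3⟩
      have : M + 1 = m (Fin.last d) := by have := h1 (Fin.last d); omega
      rw [this]; exact Fin.snoc_init_self m
    · intro m _
      simp
    · intro m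
      simp only [Finset.mem_filter, Fintype.mem_piFinset, Finset.mem_Icc]
      rintro ⟨⟨h1, h2⟩, h3⟩
      have : m (Fin.last d) = M + 1 := by have := h1 (Fin.last d); omega
      rw [Fin.prod_univ_castSucc, this, mul_comm]
      simp [Fin.init]

/-- Finite product polynomial. -/
def mzvQ (κ M : ℕ) : Polynomial ℂ :=
  ∏ j ∈ Finset.range M, (1 - Polynomial.C (1 / ((j : ℂ) + 1) ^ κ) * Polynomial.X)

lemma mzvQ_succ (κ M : ℕ) : mzvQ κ (M + 1) =
    mzvQ κ M * (1 - Polynomial.C (1 / ((M : ℂ) + 1) ^ κ) * Polynomial.X) := by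
  simp [mzvQ, Finset.prod_range_succ]

lemma mzvQ_coeff (κ M d : ℕ) : (mzvQ κ M).coeff d = (-1) ^ d * mzvSumLt d κ M := by
  induction M generalizing d with
  | zero =>
    cases d with
    | zero => simp [mzvQ, mzvSumLt_zero]
    | succ d => simp [mzvQ, mzvSumLt_succ_zero, Polynomial.coeff_one]
  | succ M ih =>
    rw [mzvQ_succ, mul_sub, mul_one, ← mul_assoc, Polynomial.coeff_sub]
    cases d with
    | zero => simp [ih, mzvSumLt_zero]
    | succ d =>
      rw [Polynomial.coeff_mul_X, Polynomial.coeff_mul_C, ih, ih, mzvSumLt_succ_succ]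
      ring

/-- Generating series of the truncated non-strict sums. -/
def mzvH (κ M : ℕ) : PowerSeries ℂ := PowerSeries.mk fun d => mzvSumLe d κ M

lemma mzvH_mul_Q (κ M : ℕ) : mzvH κ M * (mzvQ κ M : PowerSeries ℂ) = 1 := by
  induction M with
  | zero =>
    simp only [mzvQ, Finset.range_zero, Finset.prod_empty, Polynomial.coe_one, mul_one]
    ext d
    cases d with
    | zero => simp [mzvH, mzvSumLe_zero]
    | succ d => simp [mzvH, mzvSumLe_succ_zero, PowerSeries.coeff_one]
  | succ M ih =>
    have key : mzvH κ (M + 1) * (1 - PowerSeries.C (1 / ((M : ℂ) + 1) ^ κ) * PowerSeries.X)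
        = mzvH κ M := by
      ext d
      rw [mul_sub, mul_one, ← mul_assoc, map_sub]
      cases d with
      | zero => simp [mzvH, mzvSumLe_zero]
      | succ d =>
        rw [PowerSeries.coeff_succ_mul_X, PowerSeries.coeff_mul_C]
        simp only [mzvH, PowerSeries.coeff_mk]
        rw [mzvSumLe_succ_succ]
        ring
    rw [mzvQ_succ, ← ih, ← key]
    simp only [Polynomial.coe_mul, Polynomial.coe_sub, Polynomial.coe_one, Polynomial.coe_C,
      Polynomial.coe_X]
    ring

lemma sin_tendsto_unif :
    TendstoLocallyUniformlyOn
      (fun (M : ℕ) (z : ℂ) => Real.pi * z * ∏ j ∈ Finset.range M, (1 + sineTerm z j))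
      (fun z => Complex.sin (Real.pi * z)) atTop (Metric.ball 0 1) := by
  have h := (multipliableUniformlyOn_euler_sin_prod_on_compact
    (isCompact_closedBall (0 : ℂ) 1)).hasProdUniformlyOn.tendstoUniformlyOn_finsetRange
  apply TendstoUniformlyOn.tendstoLocallyUniformlyOn
  rw [Metric.tendstoUniformlyOn_iff] at h ⊢
  intro ε hε
  filter_upwards [h (ε / Real.pi) (by positivity)] with M hM z hz
  have hz1 : ‖z‖ < 1 := by simpa using hz
  have h1 := hM z (by simpa using hz1.le)
  have h2 : Complex.sin (Real.pi * z) = Real.pi * z * ∏' i : ℕ, (1 + sineTerm z i) := by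
    refine tendsto_nhds_unique (Complex.tendsto_euler_sin_prod z) ?_
    refine Tendsto.const_mul _ ?_
    have := (multipliable_sineTerm z).hasProd.tendsto_prod_nat
    refine this.congr fun n => Finset.prod_congr rfl fun j _ => ?_
    simp only [sineTerm]; ring
  rw [dist_eq_norm] at h1 ⊢
  rw [h2, ← mul_sub, norm_mul, norm_mul]
  have hp : ‖(Real.pi : ℂ)‖ = Real.pi := by
    rw [Complex.norm_real, Real.norm_of_nonneg Real.pi_pos.le]
  rw [hp]
  rw [lt_div_iff₀ Real.pi_pos] at h1
  refine lt_of_le_of_lt ?_ h1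
  have h3 : 0 ≤ ‖(∏' i : ℕ, (1 + sineTerm z i)) - ∏ j ∈ Finset.range M, (1 + sineTerm z j)‖ :=
    norm_nonneg _
  have h4 : Real.pi * ‖z‖ ≤ Real.pi := by nlinarith [Real.pi_pos]
  nlinarith [mul_le_mul_of_nonneg_right h4 h3]

lemma iter_deriv_tendsto {F : ℕ → ℂ → ℂ} {f : ℂ → ℂ} {U : Set ℂ} (hU : IsOpen U)
    (h : TendstoLocallyUniformlyOn F f atTop U) (hF : ∀ n, Differentiable ℂ (F n)) (n : ℕ) :
    TendstoLocallyUniformlyOn (fun M => iteratedDeriv n (F M)) (iteratedDeriv n f) atTop U := by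
  induction n with
  | zero => simpa using h
  | succ n ih =>
    simp only [iteratedDeriv_succ]
    refine ih.deriv (Eventually.of_forall fun M => ?_) hU
    have : ContDiff ℂ ⊤ (F M) := (hF M).contDiff
    exact (this.differentiable_iteratedDeriv n (by simp)).differentiableOn

lemma iteratedDeriv_poly (p : Polynomial ℂ) (n : ℕ) :
    iteratedDeriv n (fun z => p.eval z) 0 = n.factorial * p.coeff n := by
  have h : ∀ n, iteratedDeriv n (fun z => p.eval z) =
      fun z => (Polynomial.derivative^[n] p).eval z := by
    intro n
    induction n with
    | zero => simp
    | succ n ih =>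
      rw [iteratedDeriv_succ, ih, Function.iterate_succ_apply']
      ext z
      exact Polynomial.deriv _
  rw [h]
  simp only
  rw [← Polynomial.coeff_zero_eq_eval_zero, Polynomial.coeff_iterate_derivative]
  simp [Nat.descFactorial_self]

lemma mzvQ_tendsto (n : ℕ) :
    Tendsto (fun M => (mzvQ 2 M).coeff n) atTop
      (𝓝 ((-(Real.pi : ℂ) ^ 2) ^ n * (1 / ((2 * n + 1).factorial : ℂ)))) := by
  have hpoly : ∀ M : ℕ, (fun z : ℂ => Real.pi * z * ∏ j ∈ Finset.range M, (1 + sineTerm z j)) =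
      fun z => (Polynomial.C (Real.pi : ℂ) * Polynomial.expand ℂ 2 (mzvQ 2 M) *
        Polynomial.X).eval z := by
    intro M
    ext z
    simp only [Polynomial.eval_mul, Polynomial.eval_C, Polynomial.eval_X, Polynomial.expand_eval,
      mzvQ, Polynomial.eval_prod, Polynomial.eval_sub, Polynomial.eval_one, sineTerm]
    have : ∏ j ∈ Finset.range M, (1 + -z ^ 2 / ((j : ℂ) + 1) ^ 2) =
        ∏ j ∈ Finset.range M, (1 - 1 / ((j : ℂ) + 1) ^ 2 * z ^ 2) :=
      Finset.prod_congr rfl fun j _ => by ring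
    rw [this]; ring
  have h := iter_deriv_tendsto Metric.isOpen_ball sin_tendsto_unif
    (fun M => by rw [hpoly]; exact Polynomial.differentiable _) (2 * n + 1)
  have h0 := h.tendsto_at (show (0 : ℂ) ∈ Metric.ball (0 : ℂ) 1 by simp)
  simp only [hpoly, iteratedDeriv_poly] at h0
  simp only [Polynomial.coeff_mul_X, Polynomial.coeff_C_mul] at h0
  have he : ∀ M, (Polynomial.expand ℂ 2 (mzvQ 2 M)).coeff (2 * n) = (mzvQ 2 M).coeff n := by
    intro M
    rw [mul_comm 2 n, Polynomial.coeff_expand_mul (by norm_num)]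
  simp only [he] at h0
  rw [iteratedDeriv_comp_const_mul Complex.contDiff_sin] at h0
  simp only [Complex.iteratedDeriv_odd_sin] at h0
  have hpi : (Real.pi : ℂ) ≠ 0 := by exact_mod_cast Real.pi_ne_zero
  have hf : ((2 * n + 1).factorial : ℂ) ≠ 0 := by exact_mod_cast Nat.factorial_ne_zero _
  have h1 := h0.const_mul (1 / (((2 * n + 1).factorial : ℂ) * Real.pi))
  refine (h1.congr fun M => ?_).trans_eq ?_
  · field_simp
  · congr 1
    simp
    field_simp
    rw [neg_pow ((Real.pi : ℂ) ^ 2), ← pow_mul]; ring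

lemma ser_rescale_C (z a : ℂ) :
    PowerSeries.rescale z (PowerSeries.C a) = PowerSeries.C a := by
  ext n
  rw [PowerSeries.coeff_rescale, PowerSeries.coeff_C]
  split_ifs with h
  · simp [h]
  · simp

lemma ser_two : (2 : PowerSeries ℂ) = PowerSeries.C 2 := (map_ofNat PowerSeries.C 2).symm

/-- The series `∑ x^n / (2n+1)!`. -/
def serV : PowerSeries ℂ := PowerSeries.mk fun n => 1 / ((2 * n + 1).factorial : ℂ)

/-- The series `∑ (2^{2n}-2) B_{2n} x^n / (2n)!`. -/
def serU : PowerSeries ℂ := PowerSeries.mk fun n =>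
  ((2 : ℂ) ^ (2 * n) - 2) * (bernoulli' (2 * n) : ℂ) / ((2 * n).factorial : ℂ)

lemma expand_U : PowerSeries.expand 2 two_ne_zero serU =
    PowerSeries.rescale (2 : ℂ) (bernoulli'PowerSeries ℂ) - 2 * bernoulli'PowerSeries ℂ := by
  ext n
  rw [ser_two, map_sub, PowerSeries.coeff_C_mul,
    PowerSeries.coeff_rescale]
  simp only [bernoulli'PowerSeries, PowerSeries.coeff_mk]
  rcases Nat.even_or_odd' n with ⟨m, rfl | rfl⟩
  · rw [PowerSeries.coeff_expand_mul]
    simp [serU]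
    ring
  · rw [PowerSeries.coeff_expand_of_not_dvd _ _ _ (by omega)]
    rcases Nat.eq_zero_or_pos m with rfl | hm
    · simp
    · rw [bernoulli'_eq_zero_of_odd ⟨m, rfl⟩ (by omega)]
      simp

lemma expand_V : PowerSeries.X * PowerSeries.expand 2 two_ne_zero serV * 2 =
    PowerSeries.exp ℂ - PowerSeries.evalNegHom (PowerSeries.exp ℂ) := by
  ext n
  rw [ser_two, map_sub, PowerSeries.coeff_mul_C,
    PowerSeries.evalNegHom, PowerSeries.coeff_rescale, PowerSeries.coeff_exp]
  cases n with
  | zero => simp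
  | succ n =>
    rw [PowerSeries.coeff_succ_X_mul]
    rcases Nat.even_or_odd' n with ⟨m, rfl | rfl⟩
    · rw [PowerSeries.coeff_expand_mul]
      have : (-1 : ℂ) ^ (2 * m + 1) = -1 := Odd.neg_one_pow ⟨m, rfl⟩
      rw [this]
      simp [serV]
      ring
    · rw [PowerSeries.coeff_expand_of_not_dvd _ _ _ (by omega)]
      have : (-1 : ℂ) ^ (2 * m + 1 + 1) = 1 := Even.neg_one_pow ⟨m + 1, by ring⟩
      rw [this]
      simp

lemma U_mul_V : serU * serV = -1 := by
  have hinj : Function.Injective (PowerSeries.expand (R := ℂ) 2 two_ne_zero) := by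
    intro f g h
    ext n
    rw [← PowerSeries.coeff_expand_mul 2 two_ne_zero, h, PowerSeries.coeff_expand_mul]
  apply hinj
  rw [map_mul, map_neg, map_one]
  set E := PowerSeries.exp ℂ with hE
  set B := bernoulli'PowerSeries ℂ with hB
  have hB1 : B * (E - 1) = PowerSeries.X * E := bernoulli'PowerSeries_mul_exp_sub_one ℂ
  have hE2 : PowerSeries.rescale (2 : ℂ) E = E ^ 2 := by
    rw [hE, PowerSeries.exp_pow_eq_rescale_exp]; simp
  have hB2 : PowerSeries.rescale (2 : ℂ) B * (E ^ 2 - 1) = 2 * PowerSeries.X * E ^ 2 := by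
    have := congrArg (PowerSeries.rescale (2 : ℂ)) hB1
    rw [map_mul, map_mul, map_sub, map_one, hE2, PowerSeries.rescale_X] at this
    rw [this, ← ser_two]
  have hEE : E * PowerSeries.evalNegHom E = 1 := PowerSeries.exp_mul_exp_neg_eq_one
  have hV := expand_V
  have hU := expand_U
  rw [← hE] at hV
  rw [← hB] at hU
  set V := PowerSeries.expand 2 two_ne_zero serV
  set E' := PowerSeries.evalNegHom E
  rw [hU]
  set B₂ := PowerSeries.rescale (2 : ℂ) B
  have h2 : (2 : PowerSeries ℂ) ≠ 0 := by
    rw [ser_two]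
    exact fun h => two_ne_zero (PowerSeries.C_injective (h.trans (map_zero _).symm))
  have hX : (2 * PowerSeries.X * E : PowerSeries ℂ) ≠ 0 := by
    refine mul_ne_zero (mul_ne_zero h2 PowerSeries.X_ne_zero) ?_
    intro h
    rw [h] at hEE
    simp at hEE
  apply mul_right_cancel₀ hX
  linear_combination (B₂ - 2 * B) * E * hV + hB2 - (2 * E + 2) * hB1 - (B₂ - 2 * B) * hEE

lemma coeff_prod_rescale (k n : ℕ) (z : ℂ) (a : ℕ → ℂ) :
    PowerSeries.coeff n (∏ i : Fin k, PowerSeries.rescale (z ^ ((i : ℕ) + 1)) (PowerSeries.mk a)) =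
      ∑ f ∈ Finset.Nat.antidiagonalTuple k n,
        (∏ i, a (f i)) * z ^ (∑ i : Fin k, ((i : ℕ) + 1) * f i) := by
  rw [PowerSeries.coeff_prod]
  refine Finset.sum_bij' (fun f _ => (f : Fin k → ℕ))
    (fun f _ => Finsupp.equivFunOnFinite.symm f) ?_ ?_ ?_ ?_ ?_
  · intro f hf
    rw [Finset.mem_finsuppAntidiag] at hf
    exact Finset.Nat.mem_antidiagonalTuple.2 hf.1
  · intro f hf
    rw [Finset.mem_finsuppAntidiag]
    exact ⟨by simpa using Finset.Nat.mem_antidiagonalTuple.1 hf, by simp⟩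
  · intro f _
    ext; simp
  · intro f _
    ext; simp
  · intro f _
    simp only [PowerSeries.coeff_rescale, PowerSeries.coeff_mk]
    rw [Finset.prod_mul_distrib, ← Finset.prod_pow_eq_pow_sum, mul_comm]
    simp only [pow_mul]

lemma factor_eq (k : ℕ) (hk : 1 ≤ k) (a : ℂ) :
    (1 - PowerSeries.C (a ^ k) * PowerSeries.X ^ k : PowerSeries ℂ) =
      ∏ i : Fin k, PowerSeries.rescale (Complex.exp (2 * Real.pi * Complex.I / k) ^ ((i : ℕ) + 1))
        (1 - PowerSeries.C a * PowerSeries.X) := by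
  classical
  have hz := Complex.isPrimitiveRoot_exp k (by omega)
  set z := Complex.exp (2 * Real.pi * Complex.I / k) with hzdef
  have hC : IsPrimitiveRoot (PowerSeries.C z : PowerSeries ℂ) k :=
    hz.map_of_injective (f := PowerSeries.C (R := ℂ)) PowerSeries.C_injective
  have h := hC.pow_sub_pow_eq_prod_sub_mul (1 : PowerSeries ℂ)
    (PowerSeries.C a * PowerSeries.X) (by omega)
  rw [one_pow, mul_pow, ← map_pow] at h
  rw [h]
  symm
  have hinj : Function.Injective (fun i : Fin k => (PowerSeries.C z : PowerSeries ℂ) ^ ((i : ℕ) + 1)) := by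
    intro i j hij
    simp only [pow_succ] at hij
    have h0 : (PowerSeries.C z : PowerSeries ℂ) ≠ 0 := hC.ne_zero (by omega)
    have := hC.pow_inj i.2 j.2 (mul_right_cancel₀ h0 hij)
    exact Fin.ext this
  have himg : Polynomial.nthRootsFinset k (1 : PowerSeries ℂ) =
      Finset.univ.image (fun i : Fin k => (PowerSeries.C z : PowerSeries ℂ) ^ ((i : ℕ) + 1)) := by
    symm
    apply Finset.eq_of_subset_of_card_le
    · intro x hx
      simp only [Finset.mem_image, Finset.mem_univ, true_and] at hx
      obtain ⟨i, rfl⟩ := hx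
      rw [Polynomial.mem_nthRootsFinset (by omega), ← pow_mul, mul_comm, pow_mul, hC.pow_eq_one,
        one_pow]
    · rw [Finset.card_image_of_injective _ hinj, hC.card_nthRootsFinset]
      simp
  rw [himg, Finset.prod_image (fun i _ j _ h => hinj h)]
  refine Finset.prod_congr rfl fun i _ => ?_
  simp only [map_sub, map_one, map_mul, PowerSeries.rescale_X, ser_rescale_C, map_pow]
  ring

lemma expand_Q (k M : ℕ) (hk : 1 ≤ k) :
    PowerSeries.expand k (by omega) (mzvQ (2 * k) M : PowerSeries ℂ) =
      ∏ i : Fin k, PowerSeries.rescale (Complex.exp (2 * Real.pi * Complex.I / k) ^ ((i : ℕ) + 1))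
        (mzvQ 2 M : PowerSeries ℂ) := by
  have hc : ∀ κ, (mzvQ κ M : PowerSeries ℂ) =
      ∏ j ∈ Finset.range M, (1 - PowerSeries.C (1 / ((j : ℂ) + 1) ^ κ) * PowerSeries.X) := by
    intro κ
    rw [mzvQ, ← Polynomial.coeToPowerSeries.ringHom_apply, map_prod]
    refine Finset.prod_congr rfl fun j _ => ?_
    simp [Polynomial.coeToPowerSeries.ringHom_apply]
  simp only [hc, map_prod]
  rw [Finset.prod_comm]
  refine Finset.prod_congr rfl fun j _ => ?_
  rw [← factor_eq k hk, map_sub, map_one, map_mul, PowerSeries.expand_C, PowerSeries.expand_X]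
  congr 3
  rw [pow_mul, div_pow, one_pow]

lemma expand_H (k M : ℕ) (hk : 1 ≤ k) :
    PowerSeries.expand k (by omega) (mzvH (2 * k) M) =
      ∏ i : Fin k, PowerSeries.rescale (Complex.exp (2 * Real.pi * Complex.I / k) ^ ((i : ℕ) + 1))
        (mzvH 2 M) := by
  have h1 := congrArg (PowerSeries.expand (R := ℂ) k (by omega)) (mzvH_mul_Q (2 * k) M)
  rw [map_mul, map_one, expand_Q k M hk] at h1
  refine mul_right_cancel₀ (right_ne_zero_of_mul_eq_one h1) ?_
  rw [h1, ← Finset.prod_mul_distrib]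
  symm
  apply Finset.prod_eq_one
  intro i _
  rw [← map_mul, mzvH_mul_Q, map_one]

open scoped PowerSeries.WithPiTopology in
lemma coeff_prod_tendsto (k : ℕ) (z : ℂ) (F : ℕ → PowerSeries ℂ) (G : PowerSeries ℂ)
    (h : ∀ n, Tendsto (fun M => PowerSeries.coeff n (F M)) atTop (𝓝 (PowerSeries.coeff n G)))
    (n : ℕ) :
    Tendsto (fun M => PowerSeries.coeff n
        (∏ i : Fin k, PowerSeries.rescale (z ^ ((i : ℕ) + 1)) (F M))) atTop
      (𝓝 (PowerSeries.coeff n (∏ i : Fin k, PowerSeries.rescale (z ^ ((i : ℕ) + 1)) G))) := by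
  have : Tendsto (fun M => ∏ i : Fin k, PowerSeries.rescale (z ^ ((i : ℕ) + 1)) (F M)) atTop
      (𝓝 (∏ i : Fin k, PowerSeries.rescale (z ^ ((i : ℕ) + 1)) G)) := by
    refine tendsto_finsetProd _ fun i _ => ?_
    rw [PowerSeries.WithPiTopology.tendsto_iff_coeff_tendsto]
    intro n
    simp only [PowerSeries.coeff_rescale]
    exact (h n).const_mul _
  exact (PowerSeries.WithPiTopology.tendsto_iff_coeff_tendsto _ _ _ _).1 this n

lemma inv_tendsto (F H : ℕ → PowerSeries ℂ) (G T : PowerSeries ℂ)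
    (h : ∀ n, Tendsto (fun M => PowerSeries.coeff n (F M)) atTop (𝓝 (PowerSeries.coeff n G)))
    (hF : ∀ M, H M * F M = 1) (hG : T * G = 1) (hF1 : ∀ M, PowerSeries.coeff 0 (F M) = 1)
    (hG1 : PowerSeries.coeff 0 G = 1) (n : ℕ) :
    Tendsto (fun M => PowerSeries.coeff n (H M)) atTop (𝓝 (PowerSeries.coeff n T)) := by
  have hrec : ∀ (A B : PowerSeries ℂ), A * B = 1 → PowerSeries.coeff 0 B = 1 → ∀ n,
      PowerSeries.coeff n A = PowerSeries.coeff n (1 : PowerSeries ℂ) -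
        ∑ i ∈ Finset.range n, PowerSeries.coeff i A * PowerSeries.coeff (n - i) B := by
    intro A B hAB hB n
    rw [← hAB, PowerSeries.coeff_mul, Finset.Nat.sum_antidiagonal_eq_sum_range_succ_mk,
      Finset.sum_range_succ]
    simp only [Nat.sub_self, hB]
    ring
  induction n using Nat.strong_induction_on with
  | _ n ih =>
    rw [hrec T G hG hG1 n]
    simp only [fun M => hrec (H M) (F M) (hF M) (hF1 M) n]
    refine Tendsto.sub tendsto_const_nhds (tendsto_finsetSum _ fun i hi => ?_)
    exact (ih i (Finset.mem_range.1 hi)).mul (h _)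

/-- `sin(π √x)/(π √x)` -/
def serS : PowerSeries ℂ := PowerSeries.mk fun n =>
  (-(Real.pi : ℂ) ^ 2) ^ n * (1 / ((2 * n + 1).factorial : ℂ))

/-- `π √x / sin(π √x)` -/
def serT : PowerSeries ℂ := PowerSeries.mk fun n =>
  -((-(Real.pi : ℂ) ^ 2) ^ n *
    (((2 : ℂ) ^ (2 * n) - 2) * (bernoulli' (2 * n) : ℂ) / ((2 * n).factorial : ℂ)))

lemma T_mul_S : serT * serS = 1 := by
  have hS : serS = PowerSeries.rescale (-(Real.pi : ℂ) ^ 2) serV := by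
    ext n; simp [serS, serV, PowerSeries.coeff_rescale]
  have hT : serT = -PowerSeries.rescale (-(Real.pi : ℂ) ^ 2) serU := by
    ext n; simp [serT, serU, PowerSeries.coeff_rescale]
  rw [hS, hT, neg_mul, ← map_mul, U_mul_V]
  simp

lemma Q_tendsto_S (n : ℕ) : Tendsto (fun M => PowerSeries.coeff n (mzvQ 2 M : PowerSeries ℂ))
    atTop (𝓝 (PowerSeries.coeff n serS)) := by
  simp only [Polynomial.coeff_coe, serS, PowerSeries.coeff_mk]
  exact mzvQ_tendsto n

lemma H_tendsto_T (n : ℕ) : Tendsto (fun M => PowerSeries.coeff n (mzvH 2 M))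
    atTop (𝓝 (PowerSeries.coeff n serT)) := by
  refine inv_tendsto (fun M => (mzvQ 2 M : PowerSeries ℂ)) _ serS serT Q_tendsto_S
    (fun M => mzvH_mul_Q 2 M) T_mul_S (fun M => ?_) ?_ n
  · rw [Polynomial.coeff_coe, mzvQ_coeff, mzvSumLt_zero]; simp
  · simp [serS]

lemma coeff_S (k n : ℕ) : PowerSeries.coeff n (∏ i : Fin k,
      PowerSeries.rescale (Complex.exp (2 * Real.pi * Complex.I / k) ^ ((i : ℕ) + 1)) serS) =
    (-(Real.pi : ℂ) ^ 2) ^ n / ((2 * n + k).factorial : ℂ) * AbulletOne k n := by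
  rw [serS, coeff_prod_rescale, AbulletOne, Finset.mul_sum]
  refine Finset.sum_congr rfl fun f hf => ?_
  rw [Finset.Nat.mem_antidiagonalTuple] at hf
  rw [← mul_assoc]
  congr 1
  rw [Finset.prod_mul_distrib, Finset.prod_pow_eq_pow_sum, hf]
  have h1 := Nat.multinomial_spec Finset.univ (fun i => 2 * f i + 1)
  have h2 : ∑ i, (2 * f i + 1) = 2 * n + k := by
    rw [Finset.sum_add_distrib, ← Finset.mul_sum, hf]; simp
  rw [h2] at h1
  rw [← h1]
  have h3 : ∏ i, ((2 * f i + 1).factorial : ℂ) ≠ 0 :=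
    Finset.prod_ne_zero_iff.2 fun i _ => by exact_mod_cast Nat.factorial_ne_zero _
  have h4 : (Nat.multinomial Finset.univ (fun i => 2 * f i + 1) : ℂ) ≠ 0 := by
    intro h
    have h5 : Nat.multinomial Finset.univ (fun i => 2 * f i + 1) = 0 := by exact_mod_cast h
    rw [h5, mul_zero] at h1
    exact Nat.factorial_ne_zero _ h1.symm
  simp only [one_div, Finset.prod_inv_distrib]
  push_cast
  field_simp

lemma coeff_T (k n : ℕ) : PowerSeries.coeff n (∏ i : Fin k,
      PowerSeries.rescale (Complex.exp (2 * Real.pi * Complex.I / k) ^ ((i : ℕ) + 1)) serT) =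
    (-1) ^ k * (-(Real.pi : ℂ) ^ 2) ^ n / ((2 * n).factorial : ℂ) * AstarOne k n := by
  rw [serT, coeff_prod_rescale, AstarOne, Finset.mul_sum]
  refine Finset.sum_congr rfl fun f hf => ?_
  rw [Finset.Nat.mem_antidiagonalTuple] at hf
  rw [← mul_assoc]
  congr 1
  rw [Finset.prod_neg, Finset.prod_mul_distrib, Finset.prod_pow_eq_pow_sum, hf,
    Finset.prod_div_distrib]
  have h1 := Nat.multinomial_spec Finset.univ (fun i => 2 * f i)
  have h2 : ∑ i, (2 * f i) = 2 * n := by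
    rw [← Finset.mul_sum, hf]
  rw [h2] at h1
  rw [← h1]
  have h3 : ∏ i, ((2 * f i).factorial : ℂ) ≠ 0 :=
    Finset.prod_ne_zero_iff.2 fun i _ => by exact_mod_cast Nat.factorial_ne_zero _
  have h4 : (Nat.multinomial Finset.univ (fun i => 2 * f i) : ℂ) ≠ 0 := by
    intro h
    have h5 : Nat.multinomial Finset.univ (fun i => 2 * f i) = 0 := by exact_mod_cast h
    rw [h5, mul_zero] at h1
    exact Nat.factorial_ne_zero _ h1.symm
  push_cast
  rw [Finset.card_univ, Fintype.card_fin]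
  field_simp

/-- **Theorem 3.4 for the trivial character**: (a) `A^ω_{2n}(2k,1) = 0` when `k ∤ n`;
(b) `ζ^•_d({2k}^d) = (-1)^d (-1)^{kd} A^•_{2kd}(2k,1) π^{2kd}/((2d+1)k)!`;
(c) `ζ^★_d({2k}^d) = (-1)^{k(d-1)} A^★_{2kd}(2k,1) π^{2kd}/(2kd)!`,
the multiple zeta values being expressed as limits of their truncations. -/
theorem multiple_zeta_value_eval_II (k d : ℕ) (hk : 1 ≤ k) (hd : 1 ≤ d) :
    (∀ n : ℕ, ¬ k ∣ n → AbulletOne k n = 0 ∧ AstarOne k n = 0) ∧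
    Tendsto (mzvSumLt d (2 * k)) atTop
      (𝓝 ((-1 : ℂ) ^ d * (-1 : ℂ) ^ (k * d) * AbulletOne k (k * d) *
        (Real.pi : ℂ) ^ (2 * k * d) / (((2 * d + 1) * k).factorial : ℂ))) ∧
    Tendsto (mzvSumLe d (2 * k)) atTop
      (𝓝 ((-1 : ℂ) ^ (k * (d - 1)) * AstarOne k (k * d) *
        (Real.pi : ℂ) ^ (2 * k * d) / ((2 * k * d).factorial : ℂ))) := by
  have hpi : (-(Real.pi : ℂ) ^ 2) ≠ 0 :=
    neg_ne_zero.2 (pow_ne_zero _ (by exact_mod_cast Real.pi_ne_zero))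
  have hfac : ∀ n : ℕ, (n.factorial : ℂ) ≠ 0 := fun n => by exact_mod_cast Nat.factorial_ne_zero n
  have hQ : ∀ n, Tendsto (fun M => PowerSeries.coeff n
      (PowerSeries.expand k (by omega) (mzvQ (2 * k) M : PowerSeries ℂ))) atTop
      (𝓝 ((-(Real.pi : ℂ) ^ 2) ^ n / ((2 * n + k).factorial : ℂ) * AbulletOne k n)) := by
    intro n
    rw [← coeff_S]
    simp only [expand_Q _ _ hk]
    exact coeff_prod_tendsto k _ _ _ Q_tendsto_S n
  have hH : ∀ n, Tendsto (fun M => PowerSeries.coeff n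
      (PowerSeries.expand k (by omega) (mzvH (2 * k) M))) atTop
      (𝓝 ((-1) ^ k * (-(Real.pi : ℂ) ^ 2) ^ n / ((2 * n).factorial : ℂ) * AstarOne k n)) := by
    intro n
    rw [← coeff_T]
    simp only [expand_H _ _ hk]
    exact coeff_prod_tendsto k _ _ _ H_tendsto_T n
  refine ⟨fun n hn => ⟨?_, ?_⟩, ?_, ?_⟩
  · have h := hQ n
    simp only [PowerSeries.coeff_expand_of_not_dvd _ _ _ hn] at h
    have h0 := tendsto_nhds_unique h tendsto_const_nhds
    exact (mul_eq_zero.1 h0).resolve_left (div_ne_zero (pow_ne_zero _ hpi) (hfac _))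
  · have h := hH n
    simp only [PowerSeries.coeff_expand_of_not_dvd _ _ _ hn] at h
    have h0 := tendsto_nhds_unique h tendsto_const_nhds
    exact (mul_eq_zero.1 h0).resolve_left
      (div_ne_zero (mul_ne_zero (pow_ne_zero _ (by norm_num)) (pow_ne_zero _ hpi)) (hfac _))
  · have h := (hQ (k * d)).const_mul ((-1 : ℂ) ^ d)
    simp only [PowerSeries.coeff_expand_mul, Polynomial.coeff_coe, mzvQ_coeff] at h
    refine (h.congr fun M => ?_).trans_eq ?_
    · rw [← mul_assoc, ← mul_pow]; simp
    · congr 1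
      rw [show 2 * (k * d) + k = (2 * d + 1) * k by ring, neg_pow ((Real.pi : ℂ) ^ 2), ← pow_mul,
        ← mul_assoc 2 k d]
      ring
  · have h := hH (k * d)
    simp only [PowerSeries.coeff_expand_mul, mzvH, PowerSeries.coeff_mk] at h
    refine h.trans_eq ?_
    congr 1
    obtain ⟨e, rfl⟩ : ∃ e, d = e + 1 := ⟨d - 1, by omega⟩
    have hs : (-1 : ℂ) ^ k * (-1) ^ (k * (e + 1)) = (-1) ^ (k * e) := by
      rw [← pow_add, show k + k * (e + 1) = k * e + 2 * k by ring, pow_add, pow_mul _ 2 k]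
      simp
    rw [neg_pow ((Real.pi : ℂ) ^ 2), ← pow_mul, ← mul_assoc ((-1 : ℂ) ^ k), hs,
      ← mul_assoc 2 k (e + 1), Nat.add_sub_cancel]
    ring

end
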